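/- Let k be the algebraic closure of the finite field F_p, let χ : kˣ → kˣ be a group homomorphism (character), and let V be a k-vector space with kˣ acting on χ ⊗ V via χ. Then the group cohomology H^i(kˣ, χ ⊗ V) equals V if i = 0 and χ is the trivial character, and vanishes in all other cases (i.e., for i ≥ 1 or χ nontrivial). -/

import Mathlib

/-- The representation of `kˣ` on a `k`-vector space `V` where `g` acts by scalar
multiplication by `χ(g)`; this is the representation `χ ⊗ V`. -/
noncomputable def charRep (k : Type) [Field k] (V : Type) [AddCommGroup V] [Module k V]
    (χ : kˣ →* kˣ) : Representation k kˣ V :=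
  ((algebraMap k (Module.End k V)).toMonoidHom).comp ((Units.coeHom k).comp χ)

/-!
Let `G` be a group in which every finite subset lies in a finite subgroup of order invertible in
the field `k`, acting on `V` through a character. For a cocycle `f`, finding a primitive means
solving the linear system `(d g) x = f x`, with one equation for each tuple `x` and unknowns
`g y : V`. Summing the last argument of `f` over a finite subgroup `H`, and dividing by `± |H|`,
solves all equations whose `x` has its last entry in `H`, so every finite subsystem is solvable.
Since `G` acts by scalars, the equations have coefficients in `k`, and a linear system over a field
all of whose finite subsystems are solvable is solvable. This takes the place of the vanishing of
`lim¹`.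
-/

universe u

section LinearSystem

variable {K ι V W : Type*} [DivisionRing K] [AddCommGroup V] [Module K V]
  [AddCommGroup W] [Module K W]

theorem exists_linearMap_comp_eq_of_ker_le {U : Type*} [AddCommGroup U] [Module K U]
    (L : U →ₗ[K] W) (F : U →ₗ[K] V) (hker : LinearMap.ker L ≤ LinearMap.ker F) :
    ∃ φ : W →ₗ[K] V, φ ∘ₗ L = F := by
  obtain ⟨φ, hφ⟩ := LinearMap.exists_extend
    ((LinearMap.ker L).liftQ F hker ∘ₗ L.quotKerEquivRange.symm.toLinearMap)
  refine ⟨φ, LinearMap.ext fun c => ?_⟩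
  have hφL := LinearMap.congr_fun hφ (L.quotKerEquivRange (Submodule.Quotient.mk c))
  simpa using hφL

theorem exists_linearMap_forall_eq_of_finset (w : ι → W) (f : ι → V)
    (hfinite : ∀ s : Finset ι, ∃ φ : W →ₗ[K] V, ∀ i ∈ s, φ (w i) = f i) :
    ∃ φ : W →ₗ[K] V, ∀ i, φ (w i) = f i := by
  have hker : LinearMap.ker (Finsupp.linearCombination K w) ≤
      LinearMap.ker (Finsupp.linearCombination K f) := by
    intro c hc
    obtain ⟨φ, hφ⟩ := hfinite c.support
    calc Finsupp.linearCombination K f c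
        = Finsupp.linearCombination K (φ ∘ w) c :=
          Finsupp.sum_congr fun i hi => congrArg (c i • ·) (hφ i hi).symm
      _ = φ (Finsupp.linearCombination K w c) := (Finsupp.apply_linearCombination K φ w c).symm
      _ = 0 := by rw [LinearMap.mem_ker.1 hc, map_zero]
  obtain ⟨φ, hφ⟩ := exists_linearMap_comp_eq_of_ker_le _ _ hker
  exact ⟨φ, fun i => by simpa using LinearMap.congr_fun hφ (Finsupp.single i 1)⟩

end LinearSystem

section Snoc

variable {α : Type*} {n : ℕ}

theorem tail_snoc (x : Fin (n + 1) → α) (a : α) :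
    Fin.tail (Fin.snoc x a : Fin (n + 2) → α) = Fin.snoc (Fin.tail x) a := by
  rw [← Fin.cons_self_tail x, ← Fin.cons_snoc_eq_snoc_cons, Fin.tail_cons, Fin.tail_cons]

theorem contractNth_last (op : α → α → α) (x : Fin (n + 1) → α) :
    Fin.contractNth (Fin.last n) op x = Fin.init x :=
  funext fun i => Fin.contractNth_apply_of_lt _ _ _ _ i.isLt

theorem contractNth_castSucc_castSucc_snoc (op : α → α → α) (x : Fin (n + 1) → α) (a : α)
    (j : Fin n) :
    Fin.contractNth j.castSucc.castSucc op (Fin.snoc x a : Fin (n + 2) → α) =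
      Fin.snoc (Fin.contractNth j.castSucc op x) a := by
  funext i
  cases i using Fin.lastCases with
  | last => rw [Fin.contractNth_apply_of_gt _ _ _ _ j.isLt, Fin.succ_last, Fin.snoc_last,
      Fin.snoc_last]
  | cast i => simp only [Fin.contractNth, Fin.snoc_castSucc, Fin.val_castSucc, Fin.succ_castSucc]

theorem contractNth_castSucc_last_snoc (op : α → α → α) (x : Fin (n + 1) → α) (a : α) :
    Fin.contractNth (Fin.last n).castSucc op (Fin.snoc x a : Fin (n + 2) → α) =
      Fin.snoc (Fin.init x) (op (x (Fin.last n)) a) := by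
  funext i
  cases i using Fin.lastCases with
  | last => rw [Fin.contractNth_apply_of_eq _ _ _ _ rfl, Fin.succ_last, Fin.snoc_last,
      Fin.snoc_last, Fin.snoc_castSucc]
  | cast i => rw [Fin.contractNth_apply_of_lt _ _ _ _ i.isLt, Fin.snoc_castSucc,
      Fin.snoc_castSucc, Fin.init]

end Snoc

section Cochains

open groupCohomology inhomogeneousCochains

section Monoid

variable {k G : Type u} [CommRing k] [Monoid G] {n : ℕ}

theorem map_d_apply {A B : Rep.{u} k G} (φ : A ⟶ B) (f : (Fin n → G) → A)
    (x : Fin (n + 1) → G) : φ (d A n f x) = d B n (fun y => φ (f y)) x := by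
  simp [d_hom_apply, Rep.hom_comm_apply]

theorem d_snoc (A : Rep.{u} k G) (f : (Fin (n + 1) → G) → A) (x : Fin (n + 1) → G) (h : G) :
    d A (n + 1) f (Fin.snoc x h) =
      d A n (fun y => f (Fin.snoc y h)) x +
        (-1 : k) ^ (n + 1) • (f (Fin.snoc (Fin.init x) (x (Fin.last n) * h)) -
          f (Fin.snoc (Fin.init x) h) - f x) := by
  have htail : (fun i : Fin (n + 1) => (Fin.snoc x h : Fin (n + 2) → G) i.succ) =
      Fin.snoc (fun i : Fin n => x i.succ) h := tail_snoc x h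
  simp only [d_hom_apply, Fin.snoc_apply_zero, htail, Fin.sum_univ_castSucc (n := n + 1),
    Fin.sum_univ_castSucc (n := n), contractNth_castSucc_castSucc_snoc,
    contractNth_castSucc_last_snoc, contractNth_last, Fin.init_snoc, Fin.val_castSucc,
    Fin.val_last, pow_succ _ (n + 1)]
  module

end Monoid

section Group

variable {k G : Type u} [CommRing k] [Group G] {n : ℕ}

theorem subsingleton_groupCohomology_succ_of_forall_exists_d_eq (A : Rep.{u} k G)
    (hexact : ∀ f : (Fin (n + 1) → G) → A, d A (n + 1) f = 0 → ∃ g, d A n g = f) :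
    Subsingleton (groupCohomology A (n + 1)) := by
  have hexactAt : (inhomogeneousCochains A).ExactAt (n + 1) := by
    rw [HomologicalComplex.exactAt_iff' _ n (n + 1) (n + 2) (by simp) (by simp),
      CategoryTheory.ShortComplex.moduleCat_exact_iff]
    intro f hf
    change (inhomogeneousCochains A).d (n + 1) (n + 2) f = 0 at hf
    change ∃ g, (inhomogeneousCochains A).d n (n + 1) g = f
    rw [inhomogeneousCochains.d_def] at hf ⊢
    exact hexact f hf
  exact ModuleCat.subsingleton_of_isZero hexactAt.isZero_homology

variable (A : Rep.{u} k G)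

/-- The `n`-cochain obtained from an `(n + 1)`-cochain `f` by summing its last argument over the
finite subgroup `H`. Up to the factor `± |H|` it is a contracting homotopy on the tuples whose last
entry lies in `H`. -/
def sumLast (H : Subgroup G) [Fintype H] (f : (Fin (n + 1) → G) → A) : (Fin n → G) → A :=
  ∑ h : H, fun y => f (Fin.snoc y (h : G))

theorem sum_d_snoc (H : Subgroup G) [Fintype H] (f : (Fin (n + 1) → G) → A)
    {x : Fin (n + 1) → G} (hx : x (Fin.last n) ∈ H) :
    ∑ h : H, d A (n + 1) f (Fin.snoc x (h : G)) =
      d A n (sumLast A H f) x - (-1 : k) ^ (n + 1) • (Fintype.card H : k) • f x := by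
  have htranslate : ∑ h : H, f (Fin.snoc (Fin.init x) (x (Fin.last n) * h)) =
      ∑ h : H, f (Fin.snoc (Fin.init x) (h : G)) :=
    Fintype.sum_equiv (Equiv.mulLeft (⟨x (Fin.last n), hx⟩ : H)) _ _ fun _ => rfl
  calc ∑ h : H, d A (n + 1) f (Fin.snoc x (h : G))
      = ∑ h : H, (d A n (fun y => f (Fin.snoc y (h : G))) x +
          (-1 : k) ^ (n + 1) • (f (Fin.snoc (Fin.init x) (x (Fin.last n) * h)) -
            f (Fin.snoc (Fin.init x) (h : G)) - f x)) :=
        Finset.sum_congr rfl fun h _ => d_snoc A f x h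
    _ = ∑ h : H, d A n (fun y => f (Fin.snoc y (h : G))) x -
          (-1 : k) ^ (n + 1) • (Fintype.card H : k) • f x := by
        simp only [Finset.sum_add_distrib, ← Finset.smul_sum, Finset.sum_sub_distrib, htranslate,
          sub_self, zero_sub, Finset.sum_const, Finset.card_univ, smul_neg, ← sub_eq_add_neg,
          Nat.cast_smul_eq_nsmul]
    _ = d A n (sumLast A H f) x - (-1 : k) ^ (n + 1) • (Fintype.card H : k) • f x := by
        simp only [sumLast, map_sum, Finset.sum_apply]

theorem exists_d_apply_eq_of_last_mem {H : Subgroup G} [Finite H]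
    (hcard : IsUnit (Nat.card H : k)) {f : (Fin (n + 1) → G) → A} (hf : d A (n + 1) f = 0) :
    ∃ g : (Fin n → G) → A, ∀ x, x (Fin.last n) ∈ H → d A n g x = f x := by
  have := Fintype.ofFinite H
  obtain ⟨c, hc⟩ := ((isUnit_one.neg.pow (n + 1)).mul hcard).exists_left_inv
  refine ⟨c • sumLast A H f, fun x hx => ?_⟩
  have hsum : d A n (sumLast A H f) x = (-1 : k) ^ (n + 1) • (Nat.card H : k) • f x := by
    rw [← sub_eq_zero, Nat.card_eq_fintype_card, ← sum_d_snoc A H f hx, hf]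
    exact Finset.sum_const_zero
  rw [map_smul, Pi.smul_apply, hsum, smul_smul, smul_smul, mul_assoc, hc, one_smul]

end Group

end Cochains

section CharacterRepresentation

open groupCohomology inhomogeneousCochains

section Monoid

variable {k G : Type*} [CommRing k] [Monoid G]

/-- The representation `χ ⊗ V` of `G` on a module `V`, in which `g` acts by the scalar `χ g`;
for `G = kˣ` this is `charRep`. -/
def scalarRep (χ : G →* kˣ) (V : Type*) [AddCommGroup V] [Module k V] : Representation k G V :=
  (algebraMap k (Module.End k V)).toMonoidHom.comp ((Units.coeHom k).comp χ)

variable {V : Type*} [AddCommGroup V] [Module k V]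

theorem scalarRep_apply (χ : G →* kˣ) (g : G) (v : V) :
    scalarRep χ V g v = (χ g : k) • v :=
  rfl

instance isTrivial_scalarRep_one : (scalarRep (1 : G →* kˣ) V).IsTrivial :=
  ⟨fun g => LinearMap.ext fun v => by simp [scalarRep_apply]⟩

end Monoid

theorem invariants_scalarRep_eq_bot {k G V : Type*} [Field k] [Group G] [AddCommGroup V]
    [Module k V] {χ : G →* kˣ} (hχ : χ ≠ 1) :
    (scalarRep χ V).invariants = ⊥ := by
  obtain ⟨g, hg⟩ := DFunLike.ne_iff.1 hχ
  refine (Submodule.eq_bot_iff _).2 fun v hv => ?_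
  have hfixed : ((χ g : k) - 1) • v = 0 := by
    rw [sub_smul, one_smul, ← scalarRep_apply, hv g, sub_self]
  exact (smul_eq_zero.1 hfixed).resolve_left (sub_ne_zero.2 (Units.val_eq_one.not.2 hg))

theorem map_d_scalarRep_apply {k G V W : Type u} [CommRing k] [Monoid G] [AddCommGroup V]
    [Module k V] [AddCommGroup W] [Module k W] (χ : G →* kˣ) (φ : W →ₗ[k] V) {n : ℕ}
    (f : (Fin n → G) → W) (x : Fin (n + 1) → G) :
    φ (d (Rep.of (scalarRep χ W)) n f x) = d (Rep.of (scalarRep χ V)) n (fun y => φ (f y)) x :=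
  map_d_apply (Rep.ofHom ⟨φ, fun g => LinearMap.ext fun v => φ.map_smul (χ g : k) v⟩) f x

/-- Every finite subset of `G` lies in a finite subgroup whose order is invertible in `k`, i.e. `G`
is the directed union of such subgroups. -/
def IsLocallyFiniteOfInvertibleOrder (k G : Type*) [Semiring k] [Group G] : Prop :=
  ∀ s : Finset G, ∃ H : Subgroup G, (s : Set G) ⊆ H ∧ Finite H ∧ IsUnit (Nat.card H : k)

variable {k G V : Type u} [Field k] [Group G] [AddCommGroup V] [Module k V]

theorem exists_d_scalarRep_eq (hG : IsLocallyFiniteOfInvertibleOrder k G) (χ : G →* kˣ) {n : ℕ}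
    {f : (Fin (n + 1) → G) → V} (hf : d (Rep.of (scalarRep χ V)) (n + 1) f = 0) :
    ∃ g : (Fin n → G) → V, d (Rep.of (scalarRep χ V)) n g = f := by
  classical
  -- `universal` is the generic cochain: any `g` is `φ ∘ universal` for a unique linear `φ`.
  let universal : (Fin n → G) → ((Fin n → G) →₀ k) := fun y => Finsupp.single y 1
  obtain ⟨φ, hφ⟩ : ∃ φ : ((Fin n → G) →₀ k) →ₗ[k] V, ∀ x,
      φ (d (Rep.of (scalarRep χ ((Fin n → G) →₀ k))) n universal x) = f x := by
    refine exists_linearMap_forall_eq_of_finset _ f fun s => ?_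
    obtain ⟨H, hsH, hfinite, hcard⟩ := hG (s.image fun x => x (Fin.last n))
    obtain ⟨g, hg⟩ := exists_d_apply_eq_of_last_mem _ hcard hf
    refine ⟨Finsupp.linearCombination k g, fun x hx => ?_⟩
    rw [map_d_scalarRep_apply]
    simpa [universal] using hg x (hsH (Finset.mem_coe.2 (Finset.mem_image_of_mem _ hx)))
  exact ⟨fun y => φ (universal y), funext fun x => by rw [← map_d_scalarRep_apply, hφ]⟩

theorem subsingleton_groupCohomology_scalarRep_succ (hG : IsLocallyFiniteOfInvertibleOrder k G)
    (χ : G →* kˣ) (n : ℕ) :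
    Subsingleton (groupCohomology (Rep.of (scalarRep χ V)) (n + 1)) :=
  subsingleton_groupCohomology_succ_of_forall_exists_d_eq _ fun _ => exists_d_scalarRep_eq hG χ

theorem subsingleton_groupCohomology_scalarRep_zero {χ : G →* kˣ} (hχ : χ ≠ 1) :
    Subsingleton (groupCohomology (Rep.of (scalarRep χ V)) 0) := by
  have : Subsingleton (scalarRep χ V).invariants :=
    (Submodule.subsingleton_iff_eq_bot).2 (invariants_scalarRep_eq_bot hχ)
  exact (H0Iso (Rep.of (scalarRep χ V))).toLinearEquiv.toEquiv.subsingleton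

theorem stmt_1_general (hG : IsLocallyFiniteOfInvertibleOrder k G) (χ : G →* kˣ) :
    (χ = 1 → Nonempty (groupCohomology (Rep.of (scalarRep χ V)) 0 ≃ₗ[k] V)) ∧
    ∀ i : ℕ, (1 ≤ i ∨ χ ≠ 1) → Subsingleton (groupCohomology (Rep.of (scalarRep χ V)) i) := by
  refine ⟨?_, fun i hi => ?_⟩
  · rintro rfl
    exact ⟨(H0IsoOfIsTrivial (Rep.of (scalarRep (1 : G →* kˣ) V))).toLinearEquiv⟩
  · cases i with
    | zero => exact subsingleton_groupCohomology_scalarRep_zero (hi.resolve_left (by simp))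
    | succ n => exact subsingleton_groupCohomology_scalarRep_succ hG χ n

end CharacterRepresentation

section UnitGroups

theorem isMulTorsion_units_of_isIntegral (F R : Type*) [CommRing F] [Finite F] [Ring R]
    [Algebra F R] [Algebra.IsIntegral F R] : IsMulTorsion Rˣ := by
  intro x
  have : Module.Finite F (Algebra.adjoin F {(x : R)}) :=
    Module.Finite.iff_fg.2 (Algebra.IsIntegral.isIntegral (x : R)).fg_adjoin_singleton
  have : Finite (Algebra.adjoin F {(x : R)}) := Module.finite_of_finite F
  have hpowers : (Submonoid.powers x : Set Rˣ).MapsTo Units.val (Algebra.adjoin F {(x : R)}) := by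
    rintro _ ⟨m, rfl⟩
    simpa using pow_mem (Algebra.self_mem_adjoin_singleton F (x : R)) m
  exact finite_powers.1 (Set.Finite.of_injOn hpowers Units.val_injective.injOn (Set.toFinite _))

theorem finite_closure_of_isMulTorsion {G : Type*} [CommGroup G] (hG : IsMulTorsion G)
    (s : Set G) [Finite s] : Finite (Subgroup.closure s) :=
  have := Group.closure_finite_fg s
  CommGroup.finite_of_fg_isMulTorsion _ (hG.subgroup _)

theorem natCast_card_subgroup_units_ne_zero {R : Type*} [CommRing R] [IsDomain R]
    (H : Subgroup Rˣ) [Finite H] : (Nat.card H : R) ≠ 0 := by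
  obtain ⟨ζ, hζ⟩ := IsCyclic.exists_ofOrder_eq_natCard (α := H)
  have hprimitive : IsPrimitiveRoot (ζ : Rˣ).val (Nat.card H) :=
    IsPrimitiveRoot.coe_units_iff.2
      (IsPrimitiveRoot.coe_submonoidClass_iff.2 (hζ ▸ IsPrimitiveRoot.orderOf ζ))
  exact hprimitive.neZero'.ne

theorem isLocallyFiniteOfInvertibleOrder_units {k : Type*} [Field k] (hk : IsMulTorsion kˣ) :
    IsLocallyFiniteOfInvertibleOrder k kˣ := fun s =>
  have := finite_closure_of_isMulTorsion hk (s : Set kˣ)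
  ⟨Subgroup.closure s, Subgroup.subset_closure, this,
    (natCast_card_subgroup_units_ne_zero _).isUnit⟩

end UnitGroups

/-- Let `k = F̄_p`, `χ : kˣ → kˣ` a character and `V` a `k`-vector space with `kˣ` acting
via `χ`.  Then `H^i(kˣ, χ ⊗ V)` equals `V` when `i = 0` and `χ` is trivial, and vanishes
in all other cases (`i ≥ 1` or `χ` nontrivial). -/
theorem stmt_1 (p : ℕ) [Fact p.Prime]
    (V : Type) [AddCommGroup V] [Module (AlgebraicClosure (ZMod p)) V]
    (χ : (AlgebraicClosure (ZMod p))ˣ →* (AlgebraicClosure (ZMod p))ˣ) :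
    (χ = 1 → Nonempty
      ((groupCohomology (Rep.of (charRep (AlgebraicClosure (ZMod p)) V χ)) 0)
        ≃ₗ[AlgebraicClosure (ZMod p)] V)) ∧
    (∀ i : ℕ, (1 ≤ i ∨ χ ≠ 1) →
      Subsingleton (groupCohomology (Rep.of (charRep (AlgebraicClosure (ZMod p)) V χ)) i)) :=
  stmt_1_general (isLocallyFiniteOfInvertibleOrder_units
    (isMulTorsion_units_of_isIntegral (ZMod p) (AlgebraicClosure (ZMod p)))) χ
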